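/- Let n ≥ 2 and let 𝒜 be a malnormal subgroup system of F_n. Then the action of F_n on ∂²(F_n,𝒜) has a dense orbit: there exists x ∈ ∂²(F_n,𝒜) whose F_n-orbit is dense in ∂²(F_n,𝒜). -/

import Mathlib

/-!
The orbit is produced from a generic point `ξ` of `∂F_n` and any `η` whose first letter differs
from that of `ξ`; it is even dense in the whole of `∂²F_n`.

Density only uses that `ξ` contains every finite reduced word (`exists_bAct_close`). Given distinct
points `p u ⋯` and `p v ⋯` with common prefix `p`, the word `v⁻¹ u` is reduced, so `ξ` starts with
`a v⁻¹ u` for some `a`. Then `g = p v a⁻¹` sends `ξ` to `p u ⋯`, and sends `η` to `p v a⁻¹ η`,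
where nothing cancels because `ξ` and `η` have different first letters.

The orbit stays in `∂²(F_n,𝒜)` as soon as no translate of `ξ` lies in the limit set of a conjugate
of some `A i`. Since `A i` is finitely generated it is quasiconvex (`exists_finset_of_fg`), so
otherwise all long prefixes of `ξ` would lie in a finite union of sets `g (A i) t`
(`bAct_notMem_limitSet`).

A point `ξ` with both properties exists by the Baire category theorem (`exists_generic`). The
conditions are countably many and open. Containing a given word is a dense condition because rank
at least two leaves a letter joining any two reduced words. Escaping a finite union of sets
`g (A i) t` is a dense condition because such a union contains no cone of words with a given prefix
(`exists_extension_notMem`): two translates of a cone cover `F_n`, so `F_n` would be a finite union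
of cosets of conjugates of `A i`, and B. H. Neumann's lemma would give `A i` finite index. That is
impossible for a proper malnormal subgroup of an infinite group (`not_finiteIndex`).
-/


open scoped Classical
open MeasureTheory

noncomputable section

namespace RelCurr

/-- The alphabet `𝔄 = ℬ ∪ ℬ⁻¹`: a letter is a generator together with a sign. -/
abbrev Letter (n : ℕ) := Fin n × Bool

/-- The inverse of a letter. -/
def linv {n : ℕ} (x : Letter n) : Letter n := (x.1, !x.2)

/-- The free group of rank `n` on the basis `Fin n`. -/
abbrev F (n : ℕ) := FreeGroup (Fin n)

/-- The reduced word of an element of `F n`. -/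
def rword {n : ℕ} (g : F n) : List (Letter n) := FreeGroup.toWord g

/-- The length `|g|` of the reduced word of `g`. -/
def wlen {n : ℕ} (g : F n) : ℕ := (rword g).length

/-- The single-letter element of `F n` given by a letter. -/
def letterE {n : ℕ} (b : Letter n) : F n := FreeGroup.mk [b]

/-- The conjugate subgroup `g A g⁻¹`. -/
def conjSub {n : ℕ} (g : F n) (A : Subgroup (F n)) : Subgroup (F n) :=
  Subgroup.map (MulAut.conj g).toMonoidHom A

/-- A subgroup `A` is malnormal if `xAx⁻¹ ∩ A = {1}` for every `x ∉ A`. -/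
def Malnormal {n : ℕ} (A : Subgroup (F n)) : Prop :=
  ∀ x : F n, x ∉ A → conjSub x A ⊓ A = ⊥

/-- The word metric on the Cayley tree `T`. -/
def dist' {n : ℕ} (x y : F n) : ℕ := wlen (x⁻¹ * y)

/-- The cyclically reduced length of `a`. -/
def cycLen {n : ℕ} (a : F n) : ℕ := sInf { m | ∃ h : F n, wlen (h⁻¹ * a * h) = m }

/-- The vertex set of the minimal `A`-invariant subtree `T_A` of the Cayley tree:
the union of the axes of the nontrivial elements of `A`. -/
def treeVerts {n : ℕ} (A : Subgroup (F n)) : Set (F n) :=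
  { h | ∃ a ∈ A, a ≠ 1 ∧ wlen (h⁻¹ * a * h) = cycLen a }

/-- `γ_w ⊆ S`: every prefix of the reduced word of `w` lies in the vertex set `S`. -/
def pathIn {n : ℕ} (w : F n) (S : Set (F n)) : Prop :=
  ∀ m ≤ wlen w, FreeGroup.mk ((rword w).take m) ∈ S

/-- An element is cyclically reduced if the last letter of its reduced word is not the
inverse of the first letter. -/
def CyclicallyReduced {n : ℕ} (w : F n) : Prop :=
  ∀ x y : Letter n, (rword w).head? = some x → (rword w).getLast? = some y → y ≠ linv x

/-- `v` is a length-one extension of `w`. -/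
def LengthOneExt {n : ℕ} (w v : F n) : Prop :=
  ∃ b : Letter n, v = w * letterE b ∧ wlen v = wlen w + 1

/-- `a` is an extension of `w`: the reduced word of `w` is a proper prefix of that of `a`. -/
def ExtensionOf {n : ℕ} (w a : F n) : Prop :=
  rword w <+: rword a ∧ wlen w < wlen a

/-- `g` is a proper power. -/
def IsProperPower {n : ℕ} (g : F n) : Prop := ∃ (h : F n) (k : ℕ), 2 ≤ k ∧ g = h ^ k

section System

variable {n r : ℕ} (A : Fin r → Subgroup (F n))

/-- `[B] ∈ 𝒜`, i.e. `B` is a conjugate of one of the subgroups of the system. -/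
def InSystem (B : Subgroup (F n)) : Prop := ∃ (i : Fin r) (g : F n), B = conjSub g (A i)

/-- The family `A` represents a subgroup system: finite rank subgroups distinct
from `{1}` and `F n`. -/
def IsSystem : Prop := (∀ i, (A i).FG) ∧ (∀ i, A i ≠ ⊥) ∧ (∀ i, A i ≠ ⊤)

/-- The subgroup system is malnormal. -/
def SystemMalnormal : Prop :=
  (∀ i, Malnormal (A i)) ∧
  ∀ B₁ B₂ : Subgroup (F n), InSystem A B₁ → InSystem A B₂ → B₁ ≠ B₂ → B₁ ⊓ B₂ = ⊥

/-- `g` is `𝒜`-peripheral: trivial or contained in a conjugate of one of the `A i`. -/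
def Peripheral (g : F n) : Prop := g = 1 ∨ ∃ B, InSystem A B ∧ g ∈ B

/-- The diameter of the intersection of the trees of two distinct subgroups of the
system is at most `L`. -/
def DiamBound (L : ℕ) : Prop :=
  ∀ B₁ B₂ : Subgroup (F n), InSystem A B₁ → InSystem A B₂ → B₁ ≠ B₂ →
    ∀ x ∈ treeVerts B₁ ∩ treeVerts B₂, ∀ y ∈ treeVerts B₁ ∩ treeVerts B₂, dist' x y ≤ L

/-- `B ∈ Γ_i`: `B` is a conjugate of `A i` whose tree contains the base point `1`. -/
def GammaMem (i : Fin r) (B : Subgroup (F n)) : Prop :=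
  (∃ g : F n, B = conjSub g (A i)) ∧ (1 : F n) ∈ treeVerts B

/-- The finite set `𝒞` of words of length `L+2` whose path is contained in no tree
`T_B` with `B ∈ Γ_i`, for every `i`. -/
def Ccal (L : ℕ) : Set (F n) :=
  { w | wlen w = L + 2 ∧ ∀ (i : Fin r) (B : Subgroup (F n)), GammaMem A i B →
      ¬ pathIn w (treeVerts B) }

/-- `F_n − 𝒜`: the words containing an element of `𝒞` as a contiguous subword. -/
def FmA (L : ℕ) : Set (F n) := { w | ∃ x ∈ Ccal A L, rword x <:+: rword w }

/-- `S_k`: words of length `k` not containing any element of `𝒞` as a subword. -/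
def Sk (L k : ℕ) : Set (F n) := { w | wlen w = k ∧ w ∉ FmA A L }

end System

/-! ### The boundary of `F n` -/

/-- An infinite reduced word. -/
def IsRed {n : ℕ} (ξ : ℕ → Letter n) : Prop := ∀ i, ξ (i + 1) ≠ linv (ξ i)

/-- The Gromov boundary `∂F_n`, realized as the space of infinite reduced words,
topologized as a subspace of the product space. -/
def Boundary (n : ℕ) : Type := { ξ : ℕ → Letter n // IsRed ξ }

instance {n : ℕ} : TopologicalSpace (Boundary n) :=
  instTopologicalSpaceSubtype

/-- The length-`m` prefix of a boundary point. -/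
def bpre {n : ℕ} (ξ : Boundary n) (m : ℕ) : List (Letter n) :=
  (List.range m).map ξ.1

/-- The reduced word of `w` is a prefix of the infinite word `ξ`. -/
def wordPrefixOf {n : ℕ} (w : F n) (ξ : Boundary n) : Prop :=
  bpre ξ (wlen w) = rword w

/-- The boundary (limit set) `∂A ⊆ ∂F_n` of a subgroup `A`. -/
def limitSet {n : ℕ} (A : Subgroup (F n)) : Set (Boundary n) :=
  { ξ | ∀ m : ℕ, ∃ a ∈ A, bpre ξ m <+: rword a }

/-- `ξ = g^{+∞}`: `ξ` is the limit of the reduced words of the powers of `g`. -/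
def IsPosLimit {n : ℕ} (g : F n) (ξ : Boundary n) : Prop :=
  ∀ m : ℕ, ∃ N : ℕ, ∀ k ≥ N, bpre ξ m <+: rword (g ^ k)

/-- The number of letters cancelled when concatenating the word `l` with the
infinite reduced word `ξ`. -/
def cancelLen {n : ℕ} (l : List (Letter n)) (ξ : ℕ → Letter n) : ℕ :=
  sSup { j | j ≤ l.length ∧ ∀ i < j, l.reverse[i]? = some (linv (ξ i)) }

/-- The sequence underlying the action of `g` on a boundary point: left multiplication
followed by cancellation. -/
def actSeq {n : ℕ} (g : F n) (ξ : ℕ → Letter n) : ℕ → Letter n :=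
  fun m =>
    if h : m < (rword g).length - cancelLen (rword g) ξ then
      (rword g).get ⟨m, by omega⟩
    else ξ (m - ((rword g).length - cancelLen (rword g) ξ) + cancelLen (rword g) ξ)

/-- The action of `F n` on its boundary: left multiplication followed by cancellation.
(The sequence `actSeq g ξ.1` is always reduced, so the first branch always applies.) -/
def bAct {n : ℕ} (g : F n) (ξ : Boundary n) : Boundary n :=
  if h : IsRed (actSeq g ξ.1) then ⟨actSeq g ξ.1, h⟩ else ξ

/-! ### The double boundary -/

/-- The diagonal action of `F n` on `Sym2 (∂F_n)`, whose restriction to the set of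
non-diagonal classes is the action on the double boundary `∂²F_n`. -/
def dbAct {n : ℕ} (g : F n) : Sym2 (Boundary n) → Sym2 (Boundary n) := Sym2.map (bAct g)

/-- `∂²𝒜`: the classes `{ξ,η}` with both endpoints in `g·∂A_i = ∂(gA_ig⁻¹)` for some
`i` and `g`. -/
def dblBndA {n r : ℕ} (A : Fin r → Subgroup (F n)) : Set (Sym2 (Boundary n)) :=
  { z | ∃ (i : Fin r) (g : F n) (ξ η : Boundary n), z = s(ξ, η) ∧
      ξ ∈ limitSet (conjSub g (A i)) ∧ η ∈ limitSet (conjSub g (A i)) }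

/-- The double boundary `∂²(F_n,𝒜)` of `F n` relative to `𝒜`, as a subset of
`Sym2 (∂F_n)`: non-diagonal classes not lying in `∂²𝒜`. -/
def relSet {n r : ℕ} (A : Fin r → Subgroup (F n)) : Set (Sym2 (Boundary n)) :=
  { z | ¬ z.IsDiag } \ dblBndA A

/-- The cylinder set `C(γ_w) ⊆ ∂²F_n` of the geodesic path from `1` to `w`. -/
def cylinder {n : ℕ} (w : F n) : Set (Sym2 (Boundary n)) :=
  { z | ∃ ξ η : Boundary n, z = s(ξ, η) ∧ ξ.1 0 ≠ η.1 0 ∧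
      (wordPrefixOf w ξ ∨ wordPrefixOf w η) }

instance {n : ℕ} : MeasurableSpace (Sym2 (Boundary n)) := borel _

/-- The action of `g ∈ F n` on `∂²(F_n,𝒜)`. (The action of `F n` preserves
`∂²(F_n,𝒜)`, so the first branch always applies.) -/
def relAct {n r : ℕ} (A : Fin r → Subgroup (F n)) (g : F n) (z : ↥(relSet A)) :
    ↥(relSet A) :=
  if h : dbAct g z.1 ∈ relSet A then ⟨dbAct g z.1, h⟩ else z

/-- The cylinder `C(γ_w)` as a subset of `∂²(F_n,𝒜)`. -/
def relCyl {n r : ℕ} (A : Fin r → Subgroup (F n)) (w : F n) : Set ↥(relSet A) :=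
  Subtype.val ⁻¹' cylinder w

/-- The translated cylinder `g·C(γ_w)` as a subset of `∂²(F_n,𝒜)`. -/
def relCylG {n r : ℕ} (A : Fin r → Subgroup (F n)) (g w : F n) : Set ↥(relSet A) :=
  Subtype.val ⁻¹' (dbAct g '' cylinder w)

/-- A relative current on `(F_n,𝒜)`: an `F_n`-invariant Radon measure on the
locally compact space `∂²(F_n,𝒜)` (finite on compacts, outer regular, inner regular
on open sets). -/
def IsRelCurrent {n r : ℕ} (A : Fin r → Subgroup (F n)) (μ : Measure ↥(relSet A)) : Prop :=
  (∀ (g : F n) (s : Set ↥(relSet A)), MeasurableSet s → μ (relAct A g ⁻¹' s) = μ s) ∧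
  μ.Regular

/-- The `F_n`-orbit of a point of `Sym2 (∂F_n)`, inside `∂²(F_n,𝒜)`. -/
def orbitOf {n r : ℕ} (A : Fin r → Subgroup (F n)) (z : Sym2 (Boundary n)) :
    Set ↥(relSet A) :=
  { y | ∃ h : F n, (y : Sym2 (Boundary n)) = dbAct h z }


/-! ### Words and prefixes -/

theorem ne_linv_iff {n : ℕ} (a b : Letter n) : b ≠ linv a ↔ (a.1 = b.1 → a.2 = b.2) := by
  obtain ⟨a, s⟩ := a
  obtain ⟨b, t⟩ := b
  cases s <;> cases t <;> simp [linv, eq_comm]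

theorem linv_linv {n : ℕ} (a : Letter n) : linv (linv a) = a := by simp [linv]

/-- Rank at least two leaves a letter different from any two given ones. -/
theorem exists_letter {n : ℕ} (hn : 2 ≤ n) (x y : Letter n) :
    ∃ c : Letter n, c ≠ x ∧ c ≠ y := by
  have h : ({x, y} : Finset (Letter n)).card < (Finset.univ : Finset (Letter n)).card := by
    refine lt_of_le_of_lt Finset.card_le_two ?_
    simp
    omega
  obtain ⟨c, -, hc⟩ := Finset.exists_mem_notMem_of_card_lt_card h
  exact ⟨c, by aesop⟩

theorem rword_mk {n : ℕ} {l : List (Letter n)} (h : FreeGroup.IsReduced l) :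
    rword (FreeGroup.mk l) = l := by
  unfold rword
  rw [FreeGroup.toWord_mk, h.reduce_eq]

theorem mk_rword {n : ℕ} (g : F n) : FreeGroup.mk (rword g) = g := FreeGroup.mk_toWord

theorem isReduced_rword {n : ℕ} (g : F n) : FreeGroup.IsReduced (rword g) :=
  FreeGroup.isReduced_toWord

theorem isReduced_invRev {n : ℕ} {l : List (Letter n)} (h : FreeGroup.IsReduced l) :
    FreeGroup.IsReduced (FreeGroup.invRev l) := by
  rw [FreeGroup.isReduced_iff_reduce_eq, FreeGroup.reduce_invRev, h.reduce_eq]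

/-- The finite word `ξ k, …, ξ (k + m - 1)`. -/
def seg {n : ℕ} (ξ : Boundary n) (k m : ℕ) : List (Letter n) :=
  (List.range m).map fun i => ξ.1 (k + i)

theorem length_bpre {n : ℕ} (ξ : Boundary n) (m : ℕ) : (bpre ξ m).length = m := by
  simp [bpre]

theorem length_seg {n : ℕ} (ξ : Boundary n) (k m : ℕ) : (seg ξ k m).length = m := by
  simp [seg]

theorem bpre_add {n : ℕ} (ξ : Boundary n) (k m : ℕ) :
    bpre ξ (k + m) = bpre ξ k ++ seg ξ k m := by
  simp [bpre, seg, List.range_add, Function.comp_def]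

theorem seg_add {n : ℕ} (ξ : Boundary n) (k m j : ℕ) :
    seg ξ k (m + j) = seg ξ k m ++ seg ξ (k + m) j := by
  simp [seg, List.range_add, Function.comp_def, add_assoc]

theorem isReduced_seg {n : ℕ} (ξ : Boundary n) (k m : ℕ) :
    FreeGroup.IsReduced (seg ξ k m) := by
  unfold FreeGroup.IsReduced
  rw [List.isChain_iff_getElem]
  intro i hi
  simpa [seg, add_assoc] using (ne_linv_iff _ _).1 (ξ.2 (k + i))

theorem bpre_eq_seg {n : ℕ} (ξ : Boundary n) (m : ℕ) : bpre ξ m = seg ξ 0 m := by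
  simp [bpre, seg]

theorem isReduced_bpre {n : ℕ} (ξ : Boundary n) (m : ℕ) :
    FreeGroup.IsReduced (bpre ξ m) := by
  rw [bpre_eq_seg]
  exact isReduced_seg ξ 0 m

theorem bpre_eq_iff {n : ℕ} {ξ η : Boundary n} {m : ℕ} :
    bpre ξ m = bpre η m ↔ ∀ i < m, ξ.1 i = η.1 i := by
  simp [bpre]

theorem bpre_mono {n : ℕ} {ξ η : Boundary n} {k m : ℕ} (hk : k ≤ m)
    (h : bpre ξ m = bpre η m) : bpre ξ k = bpre η k :=
  bpre_eq_iff.2 fun i hi => bpre_eq_iff.1 h i (hi.trans_le hk)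

/-- A nonempty reduced word is a prefix of an infinite one: repeat its last letter forever. -/
theorem exists_bpre_eq {n : ℕ} {l : List (Letter n)} (hl : FreeGroup.IsReduced l)
    (hne : l ≠ []) : ∃ ξ : Boundary n, bpre ξ l.length = l := by
  have hpos : 0 < l.length := List.length_pos_iff.2 hne
  refine ⟨⟨fun i => l.getD i (l.getLast hne), fun i => ?_⟩, ?_⟩
  · rw [ne_linv_iff]
    unfold FreeGroup.IsReduced at hl
    rw [List.isChain_iff_getElem] at hl
    rcases lt_or_ge (i + 1) l.length with h | h
    · simpa [List.getD_eq_getElem?_getD, h, (Nat.lt_succ_self i).trans h] using hl i h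
    · rcases lt_or_ge i l.length with h' | h'
      · have : i = l.length - 1 := by omega
        subst this
        simp [List.getD_eq_getElem?_getD, h, List.getLast_eq_getElem, hpos]
      · simp [List.getD_eq_getElem?_getD, h, h']
  · apply List.ext_getElem
    · simp [bpre]
    · intro i h1 h2
      simp [bpre, List.getD_eq_getElem?_getD, h2]

/-! ### The boundary action -/

/-- Beyond the cancelled letters, the action on `∂F_n` is left multiplication of prefixes. -/
theorem bAct_spec {n : ℕ} (g : F n) (ξ : Boundary n) :
    ∃ k c : ℕ, ∀ m, FreeGroup.mk (bpre (bAct g ξ) (k + m)) =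
      g * FreeGroup.mk (bpre ξ (c + m)) := by
  set l := rword g with hl
  set S : Set ℕ := { j | j ≤ l.length ∧ ∀ i < j, l.reverse[i]? = some (linv (ξ.1 i)) } with hS
  set c := cancelLen l ξ.1 with hc
  have hbdd : BddAbove S := ⟨l.length, fun j hj => hj.1⟩
  have hcS : c ∈ S := Nat.sSup_mem ⟨0, by simp [hS]⟩ hbdd
  have hmax : c + 1 ∉ S := fun h => by
    have : c + 1 ≤ c := le_csSup hbdd h
    omega
  obtain ⟨hcl, hcan⟩ := hcS
  set k := l.length - c with hk
  have hchain := isReduced_rword g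
  rw [← hl] at hchain
  unfold FreeGroup.IsReduced at hchain
  rw [List.isChain_iff_getElem] at hchain
  have hlt : ∀ i (h : i < k), actSeq g ξ.1 i = l[i] := fun i h => by
    simp only [actSeq, ← hl, ← hc, ← hk, dif_pos h, List.get_eq_getElem]
  have hge : ∀ i, actSeq g ξ.1 (k + i) = ξ.1 (c + i) := fun i => by
    simp only [actSeq, ← hl, ← hc, ← hk]
    rw [dif_neg (by omega), show k + i - k + c = c + i by omega]
  have hred : IsRed (actSeq g ξ.1) := by
    intro i
    rcases lt_trichotomy (i + 1) k with h | h | h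
    · rw [hlt _ h, hlt i (by omega), ne_linv_iff]
      exact hchain i (by omega)
    · have h1 := hge 0
      simp only [Nat.add_zero, ← h] at h1
      rw [h1, hlt i (by omega)]
      -- a cancelling pair at the junction would allow one more cancellation
      intro h2
      apply hmax
      refine ⟨by omega, fun j hj => ?_⟩
      rcases Nat.lt_succ_iff_lt_or_eq.1 hj with hj | rfl
      · exact hcan j hj
      · rw [h2, linv_linv, List.getElem?_reverse (by omega)]
        rw [List.getElem?_eq_getElem (by omega)]
        congr 2
        omega
    · obtain ⟨j, rfl⟩ : ∃ j, i = k + j := ⟨i - k, by omega⟩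
      rw [hge j, add_assoc, hge (j + 1), ← add_assoc]
      exact ξ.2 _
  have hdrop : l.drop k = FreeGroup.invRev (bpre ξ c) := by
    apply List.ext_getElem
    · simp [length_bpre, hk]
      omega
    · intro i h1 h2
      have h3 : i < c := by simpa [length_bpre] using h2
      have := hcan (c - 1 - i) (by omega)
      rw [List.getElem?_reverse (by omega), List.getElem?_eq_getElem (by omega)] at this
      have h4 := Option.some.inj this
      rw [List.getElem_drop]
      have h5 : l.length - 1 - (c - 1 - i) = k + i := by omega
      simp only [h5] at h4
      rw [h4]
      simp [FreeGroup.invRev, bpre, linv]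
  refine ⟨k, c, fun m => ?_⟩
  have hb : bAct g ξ = ⟨actSeq g ξ.1, hred⟩ := dif_pos hred
  have h1 : bpre (bAct g ξ) (k + m) = l.take k ++ seg ξ c m := by
    rw [bpre_add]
    congr 1
    · rw [hb]
      apply List.ext_getElem
      · simp [bpre, hk]
      · intro i h1 h2
        have h3 : i < k := by simpa [bpre] using h1
        simp [bpre, hlt i h3]
    · rw [hb]
      simp [seg, hge]
  rw [h1, bpre_add]
  simp only [← FreeGroup.mul_mk]
  have h2 : g = FreeGroup.mk (l.take k) * FreeGroup.mk (l.drop k) := by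
    rw [FreeGroup.mul_mk, List.take_append_drop, hl, mk_rword]
  conv_rhs => rw [h2]
  rw [hdrop, ← FreeGroup.inv_mk]
  group

/-- If the reduced words of `g · ξ₀⋯ξ_{M-1}` eventually start with `q`, so does `g · ξ`. -/
theorem bpre_bAct {n : ℕ} (g : F n) (ξ : Boundary n) (q : List (Letter n)) (M : ℕ)
    (h : ∀ m ≥ M, ∃ s, FreeGroup.IsReduced (q ++ s) ∧
      g * FreeGroup.mk (bpre ξ m) = FreeGroup.mk (q ++ s)) :
    bpre (bAct g ξ) q.length = q := by
  obtain ⟨k, c, hkc⟩ := bAct_spec g ξ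
  obtain ⟨s, hs, hg⟩ := h (c + (M + q.length)) (by omega)
  have h1 := congrArg rword ((hkc (M + q.length)).trans hg)
  rw [rword_mk (isReduced_bpre _ _), rword_mk hs] at h1
  have h2 : k + (M + q.length) = q.length + (k + M) := by omega
  rw [h2, bpre_add] at h1
  exact (List.append_inj h1 (by simp [length_bpre])).1

/-! ### Topology of the boundary -/

theorem isOpen_cyl {n : ℕ} (ξ : Boundary n) (m : ℕ) :
    IsOpen {α : Boundary n | bpre α m = bpre ξ m} := by
  have h := (PiNat.isOpen_cylinder (fun _ => Letter n) ξ.1 m).preimage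
    (continuous_subtype_val : Continuous (fun α : { ξ : ℕ → Letter n // IsRed ξ } => α.1))
  have e : {α : Boundary n | bpre α m = bpre ξ m} =
      (fun α : { ξ : ℕ → Letter n // IsRed ξ } => α.1) ⁻¹' PiNat.cylinder ξ.1 m :=
    Set.ext fun α => bpre_eq_iff
  rw [e]
  exact h

theorem exists_cyl_subset {n : ℕ} {U : Set (Boundary n)} (hU : IsOpen U) {ξ : Boundary n}
    (hξ : ξ ∈ U) : ∃ m, ∀ α : Boundary n, bpre α m = bpre ξ m → α ∈ U := by
  obtain ⟨V, hV, rfl⟩ := isOpen_induced_iff.1 hU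
  obtain ⟨_, ⟨x, m, rfl⟩, hx, hxV⟩ :=
    (PiNat.isTopologicalBasis_cylinders (fun _ => Letter n)).exists_subset_of_mem_open hξ hV
  refine ⟨m, fun α hα => hxV ?_⟩
  rw [PiNat.mem_cylinder_iff] at hx ⊢
  intro i hi
  exact (bpre_eq_iff.1 hα i hi).trans (hx i hi)

theorem isOpen_of_cyl {n : ℕ} {U : Set (Boundary n)}
    (h : ∀ ξ ∈ U, ∃ m, ∀ α : Boundary n, bpre α m = bpre ξ m → α ∈ U) : IsOpen U := by
  rw [isOpen_iff_forall_mem_open]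
  intro ξ hξ
  obtain ⟨m, hm⟩ := h ξ hξ
  exact ⟨_, hm, isOpen_cyl ξ m, rfl⟩

/-- Density may be tested on the cylinders of arbitrarily long prefixes. -/
theorem dense_of_cyl {n : ℕ} {U : Set (Boundary n)} (m₀ : ℕ)
    (h : ∀ (ξ : Boundary n) (m : ℕ), m₀ ≤ m → ∃ α ∈ U, bpre α m = bpre ξ m) : Dense U := by
  rw [dense_iff_inter_open]
  rintro V hV ⟨ξ, hξ⟩
  obtain ⟨m, hm⟩ := exists_cyl_subset hV hξ
  obtain ⟨α, hα, hαm⟩ := h ξ (max m m₀) (le_max_right _ _)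
  exact ⟨α, hm α (bpre_mono (le_max_left _ _) hαm), hα⟩

theorem isClosed_isRed {n : ℕ} : IsClosed {ξ : ℕ → Letter n | IsRed ξ} := by
  simp only [IsRed, Set.ofPred_forall]
  refine isClosed_iInter fun i => ?_
  have : Continuous fun ξ : ℕ → Letter n => (ξ (i + 1), ξ i) := by fun_prop
  exact (isClosed_discrete {p : Letter n × Letter n | p.1 ≠ linv p.2}).preimage this

theorem baireSpace_boundary {n : ℕ} : BaireSpace (Boundary n) := by
  have h1 : CompactSpace (Boundary n) :=
    isCompact_iff_compactSpace.1 (isClosed_isRed (n := n)).isCompact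
  have h2 : T2Space (Boundary n) :=
    inferInstanceAs (T2Space { ξ : ℕ → Letter n // IsRed ξ })
  infer_instance

/-! ### Limit sets and finite unions of cosets -/

theorem mk_cons_linv_cons {n : ℕ} (x : Letter n) (l : List (Letter n)) :
    FreeGroup.mk (x :: linv x :: l) = FreeGroup.mk l :=
  Quot.sound (FreeGroup.Red.Step.not (L₁ := []) (x := x.1) (b := x.2))

/-- Prefixes of a product: in the Cayley tree the geodesic from `1` to `xy` is covered by any
path spelling `x` followed by the translate by `x` of the geodesic from `1` to `y`. -/
theorem prefix_mul {n : ℕ} (y : F n) (L : List (Letter n)) : ∀ q : List (Letter n),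
    q <+: rword (FreeGroup.mk L * y) →
      (∃ L', L' <+: L ∧ FreeGroup.mk q = FreeGroup.mk L') ∨
      ∃ q', q' <+: rword y ∧ FreeGroup.mk q = FreeGroup.mk L * FreeGroup.mk q' := by
  induction L with
  | nil =>
    intro q hq
    refine Or.inr ⟨q, ?_, by simp [← FreeGroup.one_eq_mk]⟩
    rwa [← FreeGroup.one_eq_mk, one_mul] at hq
  | cons x L ih =>
    intro q hq
    have hcons : ∀ l : List (Letter n), FreeGroup.mk (x :: l) = FreeGroup.mk [x] * FreeGroup.mk l :=
      fun l => by simp [FreeGroup.mul_mk]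
    have hw : rword (FreeGroup.mk (x :: L) * y) =
        FreeGroup.reduce (x :: rword (FreeGroup.mk L * y)) := by
      conv_lhs => rw [hcons, mul_assoc, ← mk_rword (FreeGroup.mk L * y), ← hcons]
      exact FreeGroup.toWord_mk
    -- it suffices to control `x⁻¹ q`, a prefix one multiplication earlier
    have key : ∀ q₀, q₀ <+: rword (FreeGroup.mk L * y) →
        FreeGroup.mk q = FreeGroup.mk [x] * FreeGroup.mk q₀ →
        (∃ L', L' <+: x :: L ∧ FreeGroup.mk q = FreeGroup.mk L') ∨
        ∃ q', q' <+: rword y ∧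
          FreeGroup.mk q = FreeGroup.mk (x :: L) * FreeGroup.mk q' := by
      intro q₀ hq₀ he
      rcases ih q₀ hq₀ with ⟨L', hL', h⟩ | ⟨q', hq', h⟩
      · exact Or.inl ⟨x :: L', (List.prefix_cons_inj x).2 hL', by rw [he, h, hcons L']⟩
      · exact Or.inr ⟨q', hq', by rw [he, h, hcons L, mul_assoc]⟩
    by_cases hred : FreeGroup.IsReduced (x :: rword (FreeGroup.mk L * y))
    · rw [hw, hred.reduce_eq] at hq
      rcases q with _ | ⟨z, q₀⟩
      · exact Or.inl ⟨[], List.nil_prefix, rfl⟩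
      · obtain ⟨rfl, hq₀⟩ := List.cons_prefix_cons.1 hq
        exact key q₀ hq₀ (hcons q₀)
    · have hr := isReduced_rword (FreeGroup.mk L * y)
      rcases hv : rword (FreeGroup.mk L * y) with _ | ⟨z, v⟩
      · simp [hv] at hred
      · rw [hv] at hr hred hw
        have hz : z = linv x := by
          by_contra hz
          exact hred (FreeGroup.isReduced_cons_cons.2 ⟨(ne_linv_iff x z).1 hz, hr⟩)
        have hxz : FreeGroup.mk (x :: z :: v) = FreeGroup.mk v := by
          rw [hz, mk_cons_linv_cons]
        have hv' : FreeGroup.IsReduced v := hr.infix ⟨[z], [], by simp⟩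
        rw [hw, FreeGroup.reduce.sound hxz, hv'.reduce_eq] at hq
        refine key (z :: q) ?_ ?_
        · rw [hv]
          exact (List.prefix_cons_inj z).2 hq
        · rw [← hcons, hz, mk_cons_linv_cons]

/-- Quasiconvexity of finitely generated subgroups of `F n`: the prefixes of the elements of `B`
lie in finitely many cosets `B t`. -/
theorem exists_finset_of_fg {n : ℕ} {B : Subgroup (F n)} (hB : B.FG) :
    ∃ T : Finset (F n), ∀ b ∈ B, ∀ q, q <+: rword b →
      ∃ a ∈ B, ∃ t ∈ T, FreeGroup.mk q = a * t := by
  obtain ⟨S, rfl⟩ := hB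
  set P : F n → Finset (F n) := fun s => ((rword s).inits.map FreeGroup.mk).toFinset with hP
  set T : Finset (F n) := insert 1 (S.biUnion fun s => P s ∪ P s⁻¹) with hT
  have hmul : ∀ x ∈ Subgroup.closure (S : Set (F n)), P x ⊆ T → ∀ y,
      (∀ q, q <+: rword y → ∃ a ∈ Subgroup.closure (S : Set (F n)), ∃ t ∈ T,
        FreeGroup.mk q = a * t) →
      ∀ q, q <+: rword (x * y) → ∃ a ∈ Subgroup.closure (S : Set (F n)), ∃ t ∈ T,
        FreeGroup.mk q = a * t := by
    intro x hx hxT y ih q hq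
    rw [← mk_rword x] at hq
    rcases prefix_mul y (rword x) q hq with ⟨L', hL', h⟩ | ⟨q', hq', h⟩
    · refine ⟨1, one_mem _, FreeGroup.mk L', hxT ?_, by rw [h, one_mul]⟩
      simp only [hP, List.mem_toFinset, List.mem_map, List.mem_inits]
      exact ⟨L', hL', rfl⟩
    · obtain ⟨a, ha, t, ht, e⟩ := ih q' hq'
      exact ⟨x * a, mul_mem hx ha, t, ht, by rw [h, e, mk_rword, mul_assoc]⟩
  refine ⟨T, fun b hb => ?_⟩
  induction hb using Subgroup.closure_induction_left with
  | one =>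
    intro q hq
    have : q = [] := by simpa [rword] using hq
    exact ⟨1, one_mem _, 1, by simp [hT], by simp [this, ← FreeGroup.one_eq_mk]⟩
  | mul_left x hx y hy ih =>
    refine hmul x (Subgroup.subset_closure hx) (fun t ht => ?_) y ih
    simp only [hT, Finset.mem_insert, Finset.mem_biUnion, Finset.mem_union]
    exact Or.inr ⟨x, hx, Or.inl ht⟩
  | inv_mul_cancel x hx y hy ih =>
    refine hmul x⁻¹ (inv_mem (Subgroup.subset_closure hx)) (fun t ht => ?_) y ih
    simp only [hT, Finset.mem_insert, Finset.mem_biUnion, Finset.mem_union]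
    exact Or.inr ⟨x, hx, Or.inr ht⟩

theorem fg_conjSub {n : ℕ} {B : Subgroup (F n)} (hB : B.FG) (g : F n) : (conjSub g B).FG := by
  obtain ⟨S, rfl⟩ := hB
  refine ⟨S.image (MulAut.conj g), ?_⟩
  rw [conjSub, MonoidHom.map_closure, Finset.coe_image]
  rfl

theorem mem_conjSub {n : ℕ} {B : Subgroup (F n)} {g x : F n} :
    x ∈ conjSub g B ↔ ∃ b ∈ B, g * b * g⁻¹ = x := by
  simp [conjSub, Subgroup.mem_map]

/-- A proper malnormal subgroup of `F n` has infinite index: otherwise it would meet a conjugate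
in a subgroup of finite index, which is nontrivial. -/
theorem not_finiteIndex {n : ℕ} (hn : 2 ≤ n) {B : Subgroup (F n)} (hB : Malnormal B)
    (htop : B ≠ ⊤) : ¬ B.FiniteIndex := by
  intro hfi
  obtain ⟨x, hx⟩ : ∃ x, x ∉ B := by
    by_contra! h
    exact htop ((Subgroup.eq_top_iff' B).2 h)
  have h1 : (conjSub x B).FiniteIndex := by
    constructor
    have : (conjSub x B).index = B.index := Subgroup.index_map_equiv B (MulAut.conj x)
    rw [this]
    exact hfi.index_ne_zero
  have h2 : (conjSub x B ⊓ B).FiniteIndex := inferInstance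
  rw [hB x hx] at h2
  have : Nonempty (Fin n) := ⟨⟨0, by omega⟩⟩
  have h3 := h2.index_ne_zero
  rw [Subgroup.index_bot] at h3
  exact h3 Nat.card_eq_zero_of_infinite

/-! ### Generic boundary points -/

theorem isReduced_append {n : ℕ} {p s : List (Letter n)} (hp : FreeGroup.IsReduced p)
    (hs : FreeGroup.IsReduced s)
    (h : ∀ a ∈ p.getLast?, ∀ b ∈ s.head?, b ≠ linv a) : FreeGroup.IsReduced (p ++ s) := by
  unfold FreeGroup.IsReduced at *
  rw [List.isChain_append]
  exact ⟨hp, hs, fun a ha b hb => (ne_linv_iff a b).1 (h a ha b hb)⟩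

theorem getLast?_bpre_succ {n : ℕ} (ξ : Boundary n) (m : ℕ) :
    (bpre ξ (m + 1)).getLast? = some (ξ.1 m) := by
  simp [bpre, List.range_succ]

open scoped Pointwise in
/-- The words having `p` as a prefix are not covered by finitely many sets `g B t` when `B` has
infinite index. -/
theorem exists_extension_notMem {n : ℕ} (hn : 2 ≤ n) {B : Subgroup (F n)}
    (hB : ¬ B.FiniteIndex) (g : F n) (T : Finset (F n)) {p : List (Letter n)} {z : Letter n}
    (hp : FreeGroup.IsReduced p) (hz : p.getLast? = some z) :
    ∃ s, FreeGroup.IsReduced (p ++ s) ∧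
      ∀ b ∈ B, ∀ t ∈ T, FreeGroup.mk (p ++ s) ≠ g * b * t := by
  by_contra! hcon
  obtain ⟨y, hy1, hy2⟩ := exists_letter hn (linv z) z
  have hC : ∀ u : F n, (rword u).head? ≠ some (linv z) →
      ∃ b ∈ B, ∃ t ∈ T, FreeGroup.mk p * u = g * b * t := by
    intro u hu
    obtain ⟨b, hb, t, ht, e⟩ := hcon (rword u) (isReduced_append hp (isReduced_rword u) (by
      rintro a ha c hc rfl
      rw [hz] at ha
      obtain rfl := Option.some.inj ha
      exact hu hc))
    exact ⟨b, hb, t, ht, by rw [← e, ← FreeGroup.mul_mk, mk_rword]⟩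
  -- an element whose word starts with `z⁻¹` no longer does so after multiplication by `y`
  have hall : ∀ u : F n, ∃ e ∈ ({1, FreeGroup.mk [y]} : Finset (F n)),
      ∃ b ∈ B, ∃ t ∈ T, FreeGroup.mk p * (e * u) = g * b * t := by
    intro u
    by_cases hu : (rword u).head? = some (linv z)
    · refine ⟨FreeGroup.mk [y], by simp, hC _ ?_⟩
      have hr : FreeGroup.IsReduced ([y] ++ rword u) := by
        refine isReduced_append FreeGroup.IsReduced.singleton (isReduced_rword u) ?_
        intro a ha b hb hab
        obtain rfl : y = a := by simpa using ha
        rw [hu] at hb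
        obtain rfl := Option.some.inj hb
        apply hy2
        rw [← linv_linv y, ← hab, linv_linv]
      have : FreeGroup.mk [y] * u = FreeGroup.mk ([y] ++ rword u) := by
        rw [← FreeGroup.mul_mk, mk_rword]
      rw [this, rword_mk hr]
      simpa using hy1
    · exact ⟨1, by simp, by simpa using hC u hu⟩
  have hcov : ⋃ i ∈ ({1, FreeGroup.mk [y]} : Finset (F n)) ×ˢ T,
      ((FreeGroup.mk p * i.1)⁻¹ * g * i.2) • ((conjSub i.2⁻¹ B : Subgroup (F n)) : Set (F n)) =
        Set.univ := by
    refine Set.eq_univ_of_forall fun u => ?_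
    obtain ⟨e, he, b, hb, t, ht, h⟩ := hall u
    refine Set.mem_biUnion (x := (e, t)) (Finset.mem_product.2 ⟨he, ht⟩) ?_
    refine Set.mem_smul_set.2 ⟨t⁻¹ * b * t⁻¹⁻¹, mem_conjSub.2 ⟨b, hb, rfl⟩, ?_⟩
    have hu : u = (FreeGroup.mk p * e)⁻¹ * (g * b * t) := by
      rw [← h]
      group
    rw [hu, smul_eq_mul]
    group
  obtain ⟨i, -, hi⟩ := Subgroup.exists_finiteIndex_of_leftCoset_cover hcov
  apply hB
  constructor
  have : (conjSub i.2⁻¹ B).index = B.index := Subgroup.index_map_equiv B (MulAut.conj i.2⁻¹)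
  rw [← this]
  exact hi.index_ne_zero

/-- The boundary points some prefix of which, of length at least `m₀`, avoids the finitely many
sets `g B t`, `t ∈ T`. -/
def avoidSet {n : ℕ} (B : Subgroup (F n)) (g : F n) (T : Finset (F n)) (m₀ : ℕ) :
    Set (Boundary n) :=
  {ξ | ∃ m ≥ m₀, ∀ b ∈ B, ∀ t ∈ T, FreeGroup.mk (bpre ξ m) ≠ g * b * t}

/-- The boundary points containing the finite word `w`. -/
def containSet {n : ℕ} (w : List (Letter n)) : Set (Boundary n) :=
  {ξ | ∃ k, seg ξ k w.length = w}

theorem isOpen_avoidSet {n : ℕ} (B : Subgroup (F n)) (g : F n) (T : Finset (F n)) (m₀ : ℕ) :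
    IsOpen (avoidSet B g T m₀) := by
  refine isOpen_of_cyl fun ξ ⟨m, hm, h⟩ => ⟨m, fun α hα => ⟨m, hm, ?_⟩⟩
  rwa [hα]

theorem dense_avoidSet {n : ℕ} (hn : 2 ≤ n) {B : Subgroup (F n)} (hB : ¬ B.FiniteIndex)
    (g : F n) (T : Finset (F n)) (m₀ : ℕ) : Dense (avoidSet B g T m₀) := by
  refine dense_of_cyl (m₀ + 1) fun ξ m hm => ?_
  obtain ⟨k, rfl⟩ : ∃ k, m = k + 1 := ⟨m - 1, by omega⟩
  obtain ⟨s, hs, hs'⟩ := exists_extension_notMem hn hB g T (isReduced_bpre ξ (k + 1))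
    (getLast?_bpre_succ ξ k)
  obtain ⟨α, hα⟩ := exists_bpre_eq hs (by
    intro h
    have := congrArg List.length h
    simp [length_bpre] at this)
  refine ⟨α, ⟨_, ?_, by rw [hα]; exact hs'⟩, ?_⟩
  · simp [length_bpre]
    omega
  · rw [List.length_append, length_bpre, bpre_add] at hα
    exact (List.append_inj hα (by simp [length_bpre])).1

theorem isOpen_containSet {n : ℕ} (w : List (Letter n)) : IsOpen (containSet w) := by
  refine isOpen_of_cyl fun ξ ⟨k, hk⟩ => ⟨k + w.length, fun α hα => ⟨k, ?_⟩⟩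
  rw [bpre_add, bpre_add] at hα
  rw [(List.append_inj hα (by simp [length_bpre])).2, hk]

theorem dense_containSet {n : ℕ} (hn : 2 ≤ n) {w : List (Letter n)}
    (hw : FreeGroup.IsReduced w) (hne : w ≠ []) : Dense (containSet w) := by
  refine dense_of_cyl 1 fun ξ m hm => ?_
  obtain ⟨k, rfl⟩ : ∃ k, m = k + 1 := ⟨m - 1, by omega⟩
  -- the letter `c` joins the prefix to `w` without cancellation
  obtain ⟨c, hc1, hc2⟩ := exists_letter hn (linv (ξ.1 k)) (linv (w.head hne))
  have h1 : FreeGroup.IsReduced ([c] ++ w) := by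
    refine isReduced_append FreeGroup.IsReduced.singleton hw ?_
    intro a ha b hb hab
    obtain rfl : c = a := by simpa using ha
    rw [List.head?_eq_some_head hne] at hb
    obtain rfl := Option.some.inj hb
    apply hc2
    rw [hab, linv_linv]
  have h2 : FreeGroup.IsReduced (bpre ξ (k + 1) ++ ([c] ++ w)) := by
    refine isReduced_append (isReduced_bpre _ _) h1 ?_
    intro a ha b hb
    rw [getLast?_bpre_succ] at ha
    obtain rfl := Option.some.inj ha
    obtain rfl : c = b := by simpa using hb
    exact hc1
  obtain ⟨α, hα⟩ := exists_bpre_eq h2 (by simp)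
  rw [List.length_append, length_bpre, bpre_add] at hα
  obtain ⟨h3, h4⟩ := List.append_inj hα (by simp [length_bpre])
  refine ⟨α, ⟨k + 1 + 1, ?_⟩, h3⟩
  rw [List.length_append, seg_add] at h4
  exact (List.append_inj h4 (by simp [length_seg])).2

/-- By Baire, some boundary point contains every reduced word and escapes every finite union of
translates `g (A i) t`, arbitrarily far out. -/
theorem exists_generic {n r : ℕ} (hn : 2 ≤ n) (A : Fin r → Subgroup (F n))
    (hA : ∀ i, ¬ (A i).FiniteIndex) :
    ∃ ξ : Boundary n, (∀ w, FreeGroup.IsReduced w → w ≠ [] → ξ ∈ containSet w) ∧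
      ∀ i g T m₀, ξ ∈ avoidSet (A i) g T m₀ := by
  have := baireSpace_boundary (n := n)
  let W := {w : List (Letter n) // FreeGroup.IsReduced w ∧ w ≠ []}
  let f : W ⊕ (Fin r × F n × Finset (F n) × ℕ) → Set (Boundary n) :=
    Sum.elim (fun w => containSet w.1) (fun p => avoidSet (A p.1) p.2.1 p.2.2.1 p.2.2.2)
  have hd : Dense (⋂ j, f j) := by
    apply dense_iInter_of_isOpen
    · rintro (w | p)
      · exact isOpen_containSet _
      · exact isOpen_avoidSet _ _ _ _
    · rintro (w | p)
      · exact dense_containSet hn w.2.1 w.2.2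
      · exact dense_avoidSet hn (hA _) _ _ _
  have : Nonempty (Boundary n) :=
    let ⟨ξ, _⟩ := exists_bpre_eq
      (FreeGroup.IsReduced.singleton (a := ((⟨0, by omega⟩, true) : Letter n))) (by simp)
    ⟨ξ⟩
  obtain ⟨ξ, hξ⟩ := hd.nonempty
  rw [Set.mem_iInter] at hξ
  exact ⟨ξ, fun w h1 h2 => hξ (Sum.inl ⟨w, h1, h2⟩),
    fun i g T m₀ => hξ (Sum.inr (i, g, T, m₀))⟩

/-- A translate of a point avoiding all finite unions of sets `g B t` lies in no limit set of a
conjugate of `B`: by quasiconvexity, the prefixes of a limit point stay in such a union. -/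
theorem bAct_notMem_limitSet {n : ℕ} {B : Subgroup (F n)} (hB : B.FG) {ξ : Boundary n}
    (hξ : ∀ g T m₀, ξ ∈ avoidSet B g T m₀) (g h : F n) :
    bAct g ξ ∉ limitSet (conjSub h B) := by
  intro hmem
  obtain ⟨T, hT⟩ := exists_finset_of_fg (fg_conjSub hB h)
  obtain ⟨k, c, hkc⟩ := bAct_spec g ξ
  obtain ⟨m, hm, hav⟩ := hξ (g⁻¹ * h) (T.image fun t => h⁻¹ * t) c
  obtain ⟨j, rfl⟩ := Nat.exists_eq_add_of_le hm
  obtain ⟨a, ha, hpre⟩ := hmem (k + j)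
  obtain ⟨a', ha', t, ht, e⟩ := hT a ha _ hpre
  obtain ⟨b, hb, rfl⟩ := mem_conjSub.1 ha'
  refine hav b hb (h⁻¹ * t) (Finset.mem_image_of_mem _ ht) ?_
  rw [hkc j] at e
  rw [← inv_mul_cancel_left g (FreeGroup.mk (bpre ξ (c + j))), e]
  group

/-! ### Density of the orbit -/

/-- If `ξ` contains every reduced word and `η` starts with another letter, some translate of
`(ξ, η)` is close to a given pair of distinct points. With `p` the common prefix of the target
points, which continue as `p u` and `p v`, and with `a v⁻¹ u` a prefix of `ξ`, the translation is
by `p v a⁻¹`. -/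
theorem exists_bAct_close {n : ℕ} {ξ η : Boundary n} (h0 : ξ.1 0 ≠ η.1 0)
    (hξ : ∀ w, FreeGroup.IsReduced w → w ≠ [] → ξ ∈ containSet w) (d k : ℕ)
    {α β : Boundary n} (heq : bpre α d = bpre β d) (hne : α.1 d ≠ β.1 d) :
    ∃ g : F n, bpre (bAct g ξ) (d + (k + 1)) = bpre α (d + (k + 1)) ∧
      bpre (bAct g η) (d + (k + 1)) = bpre β (d + (k + 1)) := by
  set p := bpre α d with hp
  set u := seg α d (k + 1) with hu
  set v := seg β d (k + 1) with hv
  have hseg : ∀ (γ : Boundary n) (i j : ℕ), (seg γ i (j + 1)).head? = some (γ.1 i) := by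
    intro γ i j
    simp [seg, List.range_succ_eq_map]
  have hu0 : u ≠ [] := by
    intro h
    have := length_seg α d (k + 1)
    rw [← hu, h] at this
    simp at this
  have hv0 : v ≠ [] := by
    intro h
    have := length_seg β d (k + 1)
    rw [← hv, h] at this
    simp at this
  have hpu : bpre α (d + (k + 1)) = p ++ u := bpre_add _ _ _
  have hpv : bpre β (d + (k + 1)) = p ++ v := by rw [bpre_add, ← heq]
  have hivne : FreeGroup.invRev v ≠ [] := by
    intro h
    have := congrArg List.length h
    rw [FreeGroup.invRev_length] at this
    exact hv0 (List.length_eq_zero_iff.1 this)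
  have hlast : (FreeGroup.invRev v).getLast? = some (linv (β.1 d)) := by
    have := hseg β d k
    rw [← hv] at this
    simp [FreeGroup.invRev, this, linv]
  have hw : FreeGroup.IsReduced (FreeGroup.invRev v ++ u) := by
    refine isReduced_append (isReduced_invRev (isReduced_seg _ _ _)) (isReduced_seg _ _ _) ?_
    intro a ha b hb hab
    rw [hlast] at ha
    obtain rfl := Option.some.inj ha
    rw [hu, hseg] at hb
    obtain rfl := Option.some.inj hb
    rw [linv_linv] at hab
    exact hne hab
  obtain ⟨m, hm⟩ := hξ _ hw (by simp [hu0])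
  set a := bpre ξ m with ha
  rw [List.length_append, seg_add] at hm
  obtain ⟨hm1, hm2⟩ := List.append_inj hm (by simp [length_seg])
  set M := m + (FreeGroup.invRev v).length with hM
  have hav : bpre ξ M = a ++ FreeGroup.invRev v := by rw [hM, bpre_add, hm1]
  have hmkav : FreeGroup.mk (bpre ξ M) = FreeGroup.mk a * (FreeGroup.mk v)⁻¹ := by
    rw [hav, ← FreeGroup.mul_mk, FreeGroup.inv_mk]
  have hlen : ∀ γ : Boundary n, (bpre γ (d + (k + 1))).length = d + (k + 1) :=
    fun γ => length_bpre _ _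
  refine ⟨FreeGroup.mk p * FreeGroup.mk v * (FreeGroup.mk a)⁻¹, ?_, ?_⟩
  · have := bpre_bAct (FreeGroup.mk p * FreeGroup.mk v * (FreeGroup.mk a)⁻¹) ξ
      (bpre α (d + (k + 1))) (M + u.length) (fun j hj => by
        obtain ⟨i, rfl⟩ := Nat.exists_eq_add_of_le hj
        refine ⟨seg ξ (M + u.length) i, ?_, ?_⟩
        · rw [hpu]
          refine FreeGroup.IsReduced.append_overlap ?_ ?_ hu0
          · rw [← hpu]
            exact isReduced_bpre _ _
          · have h := isReduced_seg ξ M (u.length + i)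
            rwa [seg_add, hm2] at h
        · rw [add_assoc, bpre_add, seg_add, hm2, hpu]
          simp only [← FreeGroup.mul_mk, hmkav]
          group)
    rwa [hlen] at this
  · have := bpre_bAct (FreeGroup.mk p * FreeGroup.mk v * (FreeGroup.mk a)⁻¹) η
      (bpre β (d + (k + 1))) 0 (fun j _ => by
        refine ⟨FreeGroup.invRev a ++ bpre η j, ?_, ?_⟩
        · rw [hpv]
          refine FreeGroup.IsReduced.append_overlap ?_ ?_ hv0
          · rw [← hpv]
            exact isReduced_bpre _ _
          · -- `v a⁻¹` is the inverse of a prefix of `ξ`, so it ends in the inverse of `ξ 0`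
            have e : v ++ (FreeGroup.invRev a ++ bpre η j) =
                FreeGroup.invRev (bpre ξ M) ++ bpre η j := by
              rw [hav, FreeGroup.invRev_append, FreeGroup.invRev_invRev, List.append_assoc]
            rw [e]
            refine isReduced_append (isReduced_invRev (isReduced_bpre _ _))
              (isReduced_bpre _ _) ?_
            intro x hx y hy hxy
            have hMpos : ∃ M', M = M' + 1 := by
              refine ⟨M - 1, ?_⟩
              have := List.length_pos_iff.2 hivne
              omega
            obtain ⟨M', hM'⟩ := hMpos
            rw [hM', bpre_eq_seg] at hx
            have h1 := hseg ξ 0 M'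
            have h2 : x = linv (ξ.1 0) := by
              simp [FreeGroup.invRev, h1] at hx
              rw [← hx]
              rfl
            have h3 : y = η.1 0 := by
              rcases j with _ | j
              · simp [bpre] at hy
              · rw [bpre_eq_seg, hseg] at hy
                exact (Option.some.inj hy).symm
            rw [h2, h3, linv_linv] at hxy
            exact h0 hxy.symm
        · rw [hpv]
          simp only [← FreeGroup.mul_mk, FreeGroup.inv_mk, mul_assoc])
    rwa [hlen] at this

/-- The action of F_n on ∂²(F_n,𝒜) has a dense orbit. -/
theorem statement_7 (n r : ℕ) (hn : 2 ≤ n) (A : Fin r → Subgroup (F n))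
    (hsys : IsSystem A) (hmal : SystemMalnormal A) :
    ∃ z : ↥(relSet A),
      Dense { y : ↥(relSet A) | ∃ g : F n, (y : Sym2 (Boundary n)) = dbAct g ↑z } := by
  obtain ⟨ξ, hcont, havoid⟩ := exists_generic hn A
    (fun i => not_finiteIndex hn (hmal.1 i) (hsys.2.2 i))
  obtain ⟨c, hc, -⟩ := exists_letter hn (ξ.1 0) (ξ.1 0)
  obtain ⟨η, hη⟩ : ∃ η : Boundary n, ξ.1 0 ≠ η.1 0 := by
    obtain ⟨η, hη⟩ := exists_bpre_eq (FreeGroup.IsReduced.singleton (a := c)) (by simp)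
    refine ⟨η, fun h => hc ?_⟩
    have : η.1 0 = c := by simpa [bpre] using hη
    rw [h, this]
  -- a pair one of whose points is a translate of `ξ` is never peripheral
  have hper : ∀ (g : F n) (ζ : Boundary n), s(bAct g ξ, ζ) ∉ dblBndA A := by
    rintro g ζ ⟨i, h, α, β, e, hα, hβ⟩
    have hno := bAct_notMem_limitSet (hsys.1 i) (havoid i) g h
    rcases Sym2.eq_iff.1 e with ⟨e, -⟩ | ⟨e, -⟩
    · exact hno (e ▸ hα)
    · exact hno (e ▸ hβ)
  have hone : bAct 1 ξ = ξ := by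
    obtain ⟨k, c, hkc⟩ := bAct_spec 1 ξ
    have hlen : k = c := by
      have h := congrArg (fun x => (rword x).length) (hkc 0)
      simpa [rword_mk (isReduced_bpre _ _), length_bpre] using h
    subst hlen
    apply Subtype.ext
    funext i
    have h := congrArg rword (hkc (i + 1))
    rw [one_mul, rword_mk (isReduced_bpre _ _), rword_mk (isReduced_bpre _ _)] at h
    exact bpre_eq_iff.1 h i (by omega)
  refine ⟨⟨s(ξ, η), ?_, ?_⟩, ?_⟩
  · intro h
    have h' : ξ = η := Sym2.mk_isDiag_iff.1 h
    exact hη (by rw [h'])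
  · have := hper 1 η
    rwa [hone] at this
  rw [dense_iff_inter_open]
  rintro V hV ⟨⟨y, hy⟩, hyV⟩
  obtain ⟨U, hU, rfl⟩ := isOpen_induced_iff.1 hV
  induction y using Sym2.ind with | _ α β
  have hαβ : α ≠ β := fun h => hy.1 (Sym2.mk_isDiag_iff.2 h)
  have hU' : IsOpen {q : Boundary n × Boundary n | s(q.1, q.2) ∈ U} :=
    hU.preimage continuous_quot_mk
  obtain ⟨U₁, U₂, hU₁, hU₂, hα, hβ, hsub⟩ := isOpen_prod_iff.1 hU' α β hyV
  obtain ⟨m₁, hm₁⟩ := exists_cyl_subset hU₁ hα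
  obtain ⟨m₂, hm₂⟩ := exists_cyl_subset hU₂ hβ
  have hex : ∃ d, α.1 d ≠ β.1 d := by
    by_contra! h
    exact hαβ (Subtype.ext (funext h))
  obtain ⟨g, hg1, hg2⟩ := exists_bAct_close hη hcont (Nat.find hex) (m₁ + m₂)
    (bpre_eq_iff.2 fun i hi => not_not.1 (Nat.find_min hex hi)) (Nat.find_spec hex)
  have hmem : s(bAct g ξ, bAct g η) ∈ U :=
    @hsub (bAct g ξ, bAct g η) ⟨hm₁ _ (bpre_mono (by omega) hg1),
      hm₂ _ (bpre_mono (by omega) hg2)⟩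
  have hne : bAct g ξ ≠ bAct g η := by
    intro h
    rw [h, hg2] at hg1
    exact Nat.find_spec hex (bpre_eq_iff.1 hg1 _ (by omega)).symm
  exact ⟨⟨s(bAct g ξ, bAct g η), fun h => hne (Sym2.mk_isDiag_iff.1 h), hper g _⟩,
    hmem, g, rfl⟩

end RelCurr
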